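/- Let G_C be a graph whose vertex set is partitioned into color classes V_1, ..., V_k, such that for all distinct i, j ∈ [k], every vertex of V_i has at least one non-neighbor in V_j. Let H be the graph obtained from G_C by turning each V_i into a clique. Let G be obtained from H by adding k new vertices t_1, ..., t_k forming a clique, with t_i additionally adjacent to every vertex of V_i. Then G_C contains a multicolored clique (a clique with exactly one vertex in each V_i) if and only if H is a labeled contraction of G. -/

import Mathlib

/-!
A sequence of labeled contractions from `G` to `H` induces a retraction `f : V(G) → V(H)` that fixes
`V(H)` and sends every edge of `G` to a single vertex or to an edge of `H`
(`LGraph.IsContractionOf.exists_retraction`).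

If `H` is a contraction of `G`, let `u = f(t_i)`. Every `v ∈ V_i` is a neighbor of `t_i`, so `u` is
equal or adjacent to `v` in `H`. If `u` were in a class other than `V_i`, it would then be adjacent
in `G_C` to all of `V_i`, which the non-neighbor hypothesis forbids. Hence `f(t_i) ∈ V_i` for every
`i`, and since the `t_i` are pairwise adjacent, the vertices `f(t_i)` form a multicolored clique.

Conversely, given a multicolored clique `s_1, …, s_k`, contract the edges `(s_i, t_i)` one after the
other. The intermediate graphs are known explicitly (`partialGraph`): after contracting the indices
in `T`, the induced graph on `V(H)` is still `H`, and a remaining `t_i` has only acquired the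
neighbors `s_j` with `j ∈ T`. Each contraction adds no edge inside `V(H)`: the neighbors of `t_i`
there are in `V_i` or of the form `s_j`, and `s_i` is already adjacent to all of them.
-/

/-- A finite simple labeled graph: a finite vertex set together with a symmetric,
irreflexive adjacency relation supported on the vertex set.  Two labeled graphs are
equal iff they have the same vertex set and the same edge set. -/
structure LGraph (α : Type) where
  verts : Finset α
  Adj : α → α → Prop
  symm : ∀ {u v}, Adj u v → Adj v u
  loopless : ∀ u, ¬ Adj u u
  mem_of_adj : ∀ {u v}, Adj u v → u ∈ verts ∧ v ∈ verts

namespace LGraph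

variable {α : Type}

/-- Build a labeled graph from a vertex set and an arbitrary relation
(which gets symmetrized, made irreflexive and restricted to the vertex set). -/
def mk' (vs : Finset α) (r : α → α → Prop) : LGraph α where
  verts := vs
  Adj x y := x ≠ y ∧ x ∈ vs ∧ y ∈ vs ∧ (r x y ∨ r y x)
  symm := by
    rintro u v ⟨hne, hu, hv, hr⟩
    exact ⟨hne.symm, hv, hu, hr.symm⟩
  loopless := by
    rintro u ⟨hne, -⟩
    exact hne rfl
  mem_of_adj := by
    rintro u v ⟨-, hu, hv, -⟩
    exact ⟨hu, hv⟩

variable [DecidableEq α]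

/-- The labeled contraction `G/(u,v)`: add an edge between `u` and every vertex of
`N_G(v) \ N_G[u]`, then delete `v` and all its incident edges. -/
def contract (G : LGraph α) (u v : α) : LGraph α where
  verts := G.verts.erase v
  Adj x y := x ≠ y ∧ x ∈ G.verts.erase v ∧ y ∈ G.verts.erase v ∧
    (G.Adj x y ∨ (x = u ∧ G.Adj v y) ∨ (y = u ∧ G.Adj v x))
  symm := by
    rintro a b ⟨hne, ha, hb, h⟩
    refine ⟨hne.symm, hb, ha, ?_⟩
    rcases h with h | h | h
    · exact Or.inl (G.symm h)
    · exact Or.inr (Or.inr h)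
    · exact Or.inr (Or.inl h)
  loopless := by
    rintro a ⟨hne, -⟩
    exact hne rfl
  mem_of_adj := by
    rintro a b ⟨-, ha, hb, -⟩
    exact ⟨ha, hb⟩

/-- The result `G/S` of applying a list of labeled contractions successively. -/
def contractSeq : LGraph α → List (α × α) → LGraph α
  | G, [] => G
  | G, (u, v) :: S => (G.contract u v).contractSeq S

/-- A list of pairs is a valid labeled contraction sequence on `G` if each pair is an
edge of the current graph when it is contracted. -/
def ValidSeq : LGraph α → List (α × α) → Prop
  | _, [] => True
  | G, (u, v) :: S => G.Adj u v ∧ (G.contract u v).ValidSeq S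

/-- `H` is a labeled contraction of `G` if `G/S = H` for some labeled
contraction sequence `S` on `G`. -/
def IsContractionOf (H G : LGraph α) : Prop :=
  ∃ S : List (α × α), G.ValidSeq S ∧ G.contractSeq S = H

/-- Reachability inside a set `W` of vertices, using only edges of `G` with both
endpoints in `W`. -/
def ReachIn (G : LGraph α) (W : Finset α) (x y : α) : Prop :=
  Relation.ReflTransGen (fun a b => a ∈ W ∧ b ∈ W ∧ G.Adj a b) x y

/-- A witness structure of `G` into `H`: a partition of `V(G)` into `|V(H)|` nonempty
sets, each inducing a connected subgraph of `G` and containing exactly one vertex of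
`H` (its representative), such that two distinct vertices `u, v` of `H` are adjacent
in `H` iff the sets containing them are adjacent in `G`. -/
structure IsWitnessStructure (G H : LGraph α) (W : Finset (Finset α)) : Prop where
  subset_verts : ∀ Wi ∈ W, Wi ⊆ G.verts
  nonempty : ∀ Wi ∈ W, Wi.Nonempty
  covers : ∀ x ∈ G.verts, ∃! Wi, Wi ∈ W ∧ x ∈ Wi
  card_eq : W.card = H.verts.card
  connected : ∀ Wi ∈ W, ∀ x ∈ Wi, ∀ y ∈ Wi, G.ReachIn Wi x y
  unique_rep : ∀ Wi ∈ W, ∃! h, h ∈ H.verts ∧ h ∈ Wi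
  adj_iff : ∀ u ∈ H.verts, ∀ v ∈ H.verts, u ≠ v → ∀ Wu ∈ W, ∀ Wv ∈ W,
    u ∈ Wu → v ∈ Wv → (H.Adj u v ↔ ∃ x ∈ Wu, ∃ y ∈ Wv, G.Adj x y)

/-- The degree of `x` inside the induced subgraph on `S`. -/
noncomputable def degreeIn (G : LGraph α) (S : Finset α) (x : α) : ℕ :=
  Set.ncard {y | y ∈ S ∧ G.Adj x y}

/-- `G` is `d`-degenerate: every nonempty (induced) subgraph has a vertex of degree
at most `d`. -/
def DegenLE (G : LGraph α) (d : ℕ) : Prop :=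
  ∀ S : Finset α, S ⊆ G.verts → S.Nonempty → ∃ x ∈ S, G.degreeIn S x ≤ d

/-- The degeneracy `δ(G)`: the smallest `d` such that every nonempty subgraph of `G`
has a vertex of degree at most `d`. -/
noncomputable def degeneracy (G : LGraph α) : ℕ := sInf {d | G.DegenLE d}

/-- The degree of a vertex. -/
noncomputable def degree (G : LGraph α) (x : α) : ℕ := Set.ncard {y | G.Adj x y}

/-- The maximum degree `Δ(G)`. -/
noncomputable def maxDegree (G : LGraph α) : ℕ := G.verts.sup fun x => G.degree x

/-- The union `G ∪ H`: vertex set `V(G) ∪ V(H)` and edge set `E(G) ∪ E(H)`. -/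
def union (G H : LGraph α) : LGraph α where
  verts := G.verts ∪ H.verts
  Adj x y := G.Adj x y ∨ H.Adj x y
  symm := by
    rintro u v (h | h)
    · exact Or.inl (G.symm h)
    · exact Or.inr (H.symm h)
  loopless := by
    rintro u (h | h)
    · exact G.loopless u h
    · exact H.loopless u h
  mem_of_adj := by
    rintro u v (h | h)
    · exact ⟨Finset.mem_union_left _ (G.mem_of_adj h).1,
        Finset.mem_union_left _ (G.mem_of_adj h).2⟩
    · exact ⟨Finset.mem_union_right _ (H.mem_of_adj h).1,
        Finset.mem_union_right _ (H.mem_of_adj h).2⟩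

/-- A tree decomposition of the labeled graph `G`: a tree `T` with a bag
`X_t ⊆ V(G)` for each node `t`, covering all vertices and edges, such that for every
vertex the set of nodes whose bags contain it is connected in `T`. -/
structure TreeDecomp (G : LGraph α) (ι : Type) where
  T : SimpleGraph ι
  isTree : T.IsTree
  bag : ι → Finset α
  bag_subset : ∀ t, bag t ⊆ G.verts
  covers_vert : ∀ x ∈ G.verts, ∃ t, x ∈ bag t
  covers_edge : ∀ {u v}, G.Adj u v → ∃ t, u ∈ bag t ∧ v ∈ bag t
  coherent : ∀ (x : α) {t₁ t₂ : ι} (p : T.Walk t₁ t₂), p.IsPath →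
    x ∈ bag t₁ → x ∈ bag t₂ → ∀ t ∈ p.support, x ∈ bag t

/-- `G` has a tree decomposition of width at most `w`. -/
def TreewidthLE (G : LGraph α) (w : ℕ) : Prop :=
  ∃ (ι : Type) (D : G.TreeDecomp ι), ∀ t, (D.bag t).card ≤ w + 1

/-- The treewidth of `G`: the minimum width of a tree decomposition of `G`. -/
noncomputable def treewidth (G : LGraph α) : ℕ := sInf {w | G.TreewidthLE w}

end LGraph

/-- The graph `H` of the reduction for Statement 12: a copy of `G_C` (on the `inl`
vertices) in which each color class `V_i` has been turned into a clique. -/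
def mccH12 {β : Type} [DecidableEq β] (k : ℕ) (GC : LGraph β) (V : Fin k → Finset β) :
    LGraph (β ⊕ Fin k) :=
  LGraph.mk' (GC.verts.image Sum.inl)
    (fun x y => ∃ u v : β, x = Sum.inl u ∧ y = Sum.inl v ∧
      (GC.Adj u v ∨ ∃ i, u ∈ V i ∧ v ∈ V i))

/-- The graph `G` of the reduction for Statement 12: `H` together with `k` new
vertices `t_1, …, t_k` (the `inr` vertices) forming a clique, with `t_i` additionally
adjacent to every vertex of `V_i`. -/
def mccG12 {β : Type} [DecidableEq β] (k : ℕ) (GC : LGraph β) (V : Fin k → Finset β) :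
    LGraph (β ⊕ Fin k) :=
  LGraph.mk' (GC.verts.image Sum.inl ∪ Finset.univ.image Sum.inr)
    (fun x y =>
      (∃ u v : β, x = Sum.inl u ∧ y = Sum.inl v ∧
        (GC.Adj u v ∨ ∃ i, u ∈ V i ∧ v ∈ V i)) ∨
      (∃ i j : Fin k, i ≠ j ∧ x = Sum.inr i ∧ y = Sum.inr j) ∨
      (∃ (i : Fin k) (u : β), x = Sum.inr i ∧ y = Sum.inl u ∧ u ∈ V i))

/-! ### Contractions as retractions -/

namespace LGraph

variable {α : Type}

theorem eq_of_verts_of_adj {G H : LGraph α} (hv : G.verts = H.verts)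
    (ha : ∀ x y, G.Adj x y ↔ H.Adj x y) : G = H := by
  obtain ⟨vG, aG, _, _, _⟩ := G
  obtain ⟨vH, aH, _, _, _⟩ := H
  obtain rfl : vG = vH := hv
  obtain rfl : aG = aH := by
    funext x y
    exact propext (ha x y)
  rfl

variable [DecidableEq α]

theorem IsContractionOf.refl (G : LGraph α) : G.IsContractionOf G :=
  ⟨[], trivial, rfl⟩

theorem IsContractionOf.head {G H : LGraph α} {u v : α} (huv : G.Adj u v)
    (h : H.IsContractionOf (G.contract u v)) : H.IsContractionOf G := by
  obtain ⟨S, hS, rfl⟩ := h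
  exact ⟨(u, v) :: S, ⟨huv, hS⟩, rfl⟩

/-- The map sending each vertex of `G` to the vertex of `H` that absorbs it is a retraction onto
`V(H)` under which every edge is collapsed or mapped to an edge of `H`. -/
theorem IsContractionOf.exists_retraction {G H : LGraph α} (h : H.IsContractionOf G) :
    ∃ f : α → α, (∀ x ∈ G.verts, f x ∈ H.verts) ∧ (∀ x ∈ H.verts, f x = x) ∧
      ∀ x y, G.Adj x y → f x = f y ∨ H.Adj (f x) (f y) := by
  obtain ⟨S, hS, rfl⟩ := h
  induction S generalizing G with
  | nil => exact ⟨id, fun x hx => hx, fun x _ => rfl, fun x y hxy => Or.inr hxy⟩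
  | cons p S ih =>
    obtain ⟨u, v⟩ := p
    obtain ⟨huv, hS⟩ := hS
    obtain ⟨f, hf, hfix, hadj⟩ := ih hS
    have hne : u ≠ v := by
      rintro rfl
      exact G.loopless u huv
    have hu : u ∈ G.verts.erase v := Finset.mem_erase.2 ⟨hne, (G.mem_of_adj huv).1⟩
    have hsub : ∀ (S : List (α × α)) (K : LGraph α), (K.contractSeq S).verts ⊆ K.verts := by
      intro S
      induction S with
      | nil => exact fun K => subset_rfl
      | cons q S ih => exact fun K => (ih (K.contract q.1 q.2)).trans (Finset.erase_subset _ _)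
    -- The contraction `(u, v)` moves `v` to `u`; the rest of the sequence acts by `f`.
    refine ⟨fun x => f (if x = v then u else x), ?_, ?_, ?_⟩
    · intro x hx
      by_cases hxv : x = v
      · simpa [hxv, contractSeq] using hf u hu
      · simpa [hxv, contractSeq] using hf x (Finset.mem_erase.2 ⟨hxv, hx⟩)
    · intro x hx
      have hxv : x ≠ v := (Finset.mem_erase.1 (hsub S (G.contract u v) hx)).1
      simpa [hxv, contractSeq] using hfix x hx
    · intro x y hxy
      obtain ⟨hx, hy⟩ := G.mem_of_adj hxy
      have hxy' : ∀ a b, a ≠ b → a ∈ G.verts.erase v → b ∈ G.verts.erase v →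
          (G.Adj a b ∨ (a = u ∧ G.Adj v b) ∨ (b = u ∧ G.Adj v a)) → f a = f b ∨
          ((G.contract u v).contractSeq S).Adj (f a) (f b) :=
        fun a b h₁ h₂ h₃ h₄ => hadj a b ⟨h₁, h₂, h₃, h₄⟩
      have hsymm : G.Adj y x := G.symm hxy
      have hloop := G.loopless x
      change f _ = f _ ∨ ((G.contract u v).contractSeq S).Adj (f _) (f _)
      by_cases he : (if x = v then u else x) = (if y = v then u else y)
      · exact Or.inl (congrArg f he)
      · apply hxy' _ _ he <;> grind

end LGraph

/-! ### Contracting the terminals into a clique, and back -/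

section Reduction

variable {β : Type} [DecidableEq β] {k : ℕ}

/-- The adjacency rule of `partialGraph`, to be symmetrized: `t_i` is joined to the vertices of
`V_i` and to the vertices `s_j` whose partner `t_j` has been contracted (`j ∈ T`). -/
def partialRel (GC : LGraph β) (V : Fin k → Finset β) (s : Fin k → β) (T : Finset (Fin k)) :
    β ⊕ Fin k → β ⊕ Fin k → Prop
  | .inl u, .inl v => GC.Adj u v ∨ ∃ i, u ∈ V i ∧ v ∈ V i
  | .inr _, .inr _ => True
  | .inr i, .inl u => u ∈ V i ∨ ∃ j ∈ T, u = s j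
  | .inl _, .inr _ => False

/-- The graph reached from `mccG12 k GC V` by contracting the edges `(s_i, t_i)` with `i ∈ T`, when
`s` is a multicolored clique. -/
def partialGraph (GC : LGraph β) (V : Fin k → Finset β) (s : Fin k → β) (T : Finset (Fin k)) :
    LGraph (β ⊕ Fin k) :=
  LGraph.mk' (GC.verts.image Sum.inl ∪ Tᶜ.image Sum.inr) (partialRel GC V s T)

theorem partialGraph_empty (GC : LGraph β) (V : Fin k → Finset β) (s : Fin k → β) :
    partialGraph GC V s ∅ = mccG12 k GC V := by
  apply LGraph.eq_of_verts_of_adj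
  · simp [partialGraph, mccG12, LGraph.mk']
  · rintro (x | x) (y | y) <;> simp [partialGraph, mccG12, LGraph.mk', partialRel] <;> grind

theorem partialGraph_univ (GC : LGraph β) (V : Fin k → Finset β) (s : Fin k → β) :
    partialGraph GC V s Finset.univ = mccH12 k GC V := by
  apply LGraph.eq_of_verts_of_adj
  · simp [partialGraph, mccH12, LGraph.mk']
  · rintro (x | x) (y | y) <;> simp [partialGraph, mccH12, LGraph.mk', partialRel]

variable {GC : LGraph β} {V : Fin k → Finset β} {s : Fin k → β}

theorem partialGraph_adj (hVsub : ∀ i, V i ⊆ GC.verts) (hs : ∀ i, s i ∈ V i)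
    {T : Finset (Fin k)} {i : Fin k} (hi : i ∉ T) :
    (partialGraph GC V s T).Adj (.inl (s i)) (.inr i) := by
  have := hVsub i (hs i)
  simp [partialGraph, LGraph.mk', partialRel, hs, hi, this]

theorem partialGraph_contract (hVsub : ∀ i, V i ⊆ GC.verts) (hs : ∀ i, s i ∈ V i)
    (hadj : ∀ i j, i ≠ j → GC.Adj (s i) (s j)) {T : Finset (Fin k)} {i : Fin k} (hi : i ∉ T) :
    (partialGraph GC V s T).contract (.inl (s i)) (.inr i) =
      partialGraph GC V s (insert i T) := by
  have hmem : ∀ i, s i ∈ GC.verts := fun i => hVsub i (hs i)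
  have hsymm : ∀ u v, GC.Adj u v → GC.Adj v u := fun _ _ h => GC.symm h
  apply LGraph.eq_of_verts_of_adj
  · ext (x | x) <;> simp [partialGraph, LGraph.mk', LGraph.contract]
  · rintro (x | x) (y | y) <;>
      simp [partialGraph, LGraph.mk', LGraph.contract, partialRel] <;> grind

theorem isContractionOf_of_clique (hVsub : ∀ i, V i ⊆ GC.verts) (hs : ∀ i, s i ∈ V i)
    (hadj : ∀ i j, i ≠ j → GC.Adj (s i) (s j)) :
    (mccH12 k GC V).IsContractionOf (mccG12 k GC V) := by
  -- Induction on the set `R` of indices that remain to be contracted.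
  have key : ∀ R : Finset (Fin k),
      (partialGraph GC V s Finset.univ).IsContractionOf (partialGraph GC V s Rᶜ) := by
    intro R
    induction R using Finset.induction_on with
    | empty => simpa using LGraph.IsContractionOf.refl _
    | insert i R hi ih =>
      have hi' : i ∉ (insert i R)ᶜ := by simp
      have hR : insert i (insert i R)ᶜ = Rᶜ := by
        ext j
        simp only [Finset.mem_insert, Finset.mem_compl]
        grind
      refine LGraph.IsContractionOf.head (partialGraph_adj hVsub hs hi') ?_
      rwa [partialGraph_contract hVsub hs hadj hi', hR]
  simpa [partialGraph_univ, partialGraph_empty] using key Finset.univ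

/-- Edges of `H` between different color classes are edges of `G_C`. -/
theorem adj_of_mccH12_adj (hVdisj : ∀ i j, i ≠ j → Disjoint (V i) (V j)) {i j : Fin k}
    (hij : i ≠ j) {u v : β} (hu : u ∈ V i) (hv : v ∈ V j)
    (h : (mccH12 k GC V).Adj (.inl u) (.inl v)) : GC.Adj u v := by
  have hclass : ∀ l, u ∈ V l → v ∉ V l := by
    intro l hul hvl
    have h₁ : l = i := by
      by_contra hne
      exact Finset.disjoint_left.1 (hVdisj l i hne) hul hu
    have h₂ : l = j := by
      by_contra hne
      exact Finset.disjoint_left.1 (hVdisj l j hne) hvl hv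
    exact hij (h₁.symm.trans h₂)
  have hsymm : GC.Adj v u → GC.Adj u v := fun h => GC.symm h
  simp [mccH12, LGraph.mk'] at h
  grind

theorem clique_of_isContractionOf
    (hVsub : ∀ i, V i ⊆ GC.verts)
    (hVdisj : ∀ i j, i ≠ j → Disjoint (V i) (V j))
    (hVcover : ∀ x ∈ GC.verts, ∃ i, x ∈ V i)
    (hNonNbr : ∀ i j, i ≠ j → ∀ u ∈ V i, ∃ v ∈ V j, ¬ GC.Adj u v)
    (h : (mccH12 k GC V).IsContractionOf (mccG12 k GC V)) :
    ∃ s : Fin k → β, (∀ i, s i ∈ V i) ∧ ∀ i j, i ≠ j → GC.Adj (s i) (s j) := by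
  obtain ⟨f, hf, hfix, hadj⟩ := h.exists_retraction
  have hrep : ∀ i : Fin k, ∃ u ∈ V i, f (.inr i) = .inl u := by
    intro i
    have hi := hf (.inr i) (by simp [mccG12, LGraph.mk'])
    obtain ⟨u, hu, hfu⟩ : ∃ u ∈ GC.verts, Sum.inl u = f (.inr i) := by
      simpa [mccH12, LGraph.mk'] using hi
    obtain ⟨j, hj⟩ := hVcover u hu
    refine ⟨u, ?_, hfu.symm⟩
    by_cases hji : j = i
    · exact hji ▸ hj
    · exfalso
      obtain ⟨v, hv, hnv⟩ := hNonNbr j i hji u hj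
      have hvG := hVsub i hv
      have htv : (mccG12 k GC V).Adj (.inr i) (.inl v) := by
        simp [mccG12, LGraph.mk', hv, hvG]
      have hfv := hfix (.inl v) (by simp [mccH12, LGraph.mk', hvG])
      have := hadj _ _ htv
      rw [hfv, ← hfu] at this
      rcases this with heq | hH
      · obtain rfl : u = v := Sum.inl_injective heq
        exact Finset.disjoint_left.1 (hVdisj j i hji) hj hv
      · exact hnv (adj_of_mccH12_adj hVdisj hji hj hv hH)
  choose s hs hfs using hrep
  refine ⟨s, hs, fun i j hij => ?_⟩
  have ht : (mccG12 k GC V).Adj (.inr i) (.inr j) := by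
    simp [mccG12, LGraph.mk', hij]
  have := hadj _ _ ht
  rw [hfs, hfs] at this
  rcases this with heq | hH
  · have heq' : s i = s j := Sum.inl_injective heq
    exact absurd (heq' ▸ hs j) (Finset.disjoint_left.1 (hVdisj i j hij) (hs i))
  · exact adj_of_mccH12_adj hVdisj hij (hs i) (hs j) hH

end Reduction

/-- Let `G_C` be a graph whose vertex set is partitioned into color
classes `V_1, …, V_k` such that every vertex of `V_i` has a non-neighbor in each
other class `V_j`.  With `H` obtained from `G_C` by turning each class into a clique,
and `G` obtained from `H` by adding a clique of new vertices `t_1, …, t_k` with `t_i`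
adjacent to all of `V_i`:  `G_C` has a multicolored clique iff `H` is a labeled
contraction of `G`. -/
theorem multicoloredClique_iff_isContractionOf {β : Type} [DecidableEq β]
    (k : ℕ) (GC : LGraph β) (V : Fin k → Finset β)
    (hVsub : ∀ i, V i ⊆ GC.verts)
    (hVdisj : ∀ i j, i ≠ j → Disjoint (V i) (V j))
    (hVcover : ∀ x ∈ GC.verts, ∃ i, x ∈ V i)
    (hNonNbr : ∀ i j, i ≠ j → ∀ u ∈ V i, ∃ v ∈ V j, ¬ GC.Adj u v) :
    (∃ s : Fin k → β, (∀ i, s i ∈ V i) ∧ ∀ i j, i ≠ j → GC.Adj (s i) (s j)) ↔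
      (mccH12 k GC V).IsContractionOf (mccG12 k GC V) := by
  constructor
  · rintro ⟨s, hs, hadj⟩
    exact isContractionOf_of_clique hVsub hs hadj
  · exact clique_of_isContractionOf hVsub hVdisj hVcover hNonNbr
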